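/- Let r ∈ [1,2) and t, x ∈ ℝ with t ≠ x. Then the translation average of the kernel exists: there is A ∈ ℝ such that (1/(2R)) ∫_{−R}^{R} K^{α,r}(t,x) dα → A as R → ∞. -/

import Mathlib

/-!
For fixed `α` and each scale `k`, exactly one interval of length `L = 2^r 2^{-k}` of the grid
contains `t`, so the kernel is a sum over scales alone, `K = ∑ₖ Fₖ(α)`, where `Fₖ` is the summand
of the interval containing `t` (`Kker_eq`). Moving `α` by `L` does not change the grid at
scale `k`, so `Fₖ` is `L`-periodic, and `|Fₖ| ≤ min (4 / L) (4 L / |t - x|²)`: the first bound is the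
size of a product of two Haar functions, the second holds because `Fₖ` vanishes when
`L ≤ |t - x|`. This bound is independent of `α` and summable over `k ∈ ℤ`. A bounded measurable periodic
function has a mean (`tendsto_average_of_periodic`), so dominated convergence for series,
applied once to exchange sum and integral and once to let `R → ∞`, gives the average of `K` as
the sum of the means of the `Fₖ`.
-/

open MeasureTheory Filter
open scoped ENNReal MeasureTheory

noncomputable section

/-- The `L²`-normalized Haar function of the half-open interval `[a, b)`. -/
def haarItv (a b x : ℝ) : ℝ :=
  if a ≤ x ∧ x < (a + b) / 2 then -(Real.sqrt (b - a))⁻¹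
  else if (a + b) / 2 ≤ x ∧ x < b then (Real.sqrt (b - a))⁻¹
  else 0

/-- Left endpoint of the interval `2^r I + α`, `I = [m 2^{-k}, (m+1) 2^{-k}) ∈ D`. -/
def gridL (α r : ℝ) (k m : ℤ) : ℝ := (2 : ℝ) ^ r * ((m : ℝ) * (2 : ℝ) ^ (-k)) + α

/-- Right endpoint of the interval `2^r I + α`. -/
def gridR (α r : ℝ) (k m : ℤ) : ℝ := (2 : ℝ) ^ r * (((m : ℝ) + 1) * (2 : ℝ) ^ (-k)) + α

/-- The summand `-h_{I_-}(t) h_{I_+}(x) + h_{I_+}(t) h_{I_-}(x)` of the kernel,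
for the interval `I = 2^r [m 2^{-k}, (m+1) 2^{-k}) + α ∈ D^{α,r}`. -/
def Ksummand (α r : ℝ) (k m : ℤ) (t x : ℝ) : ℝ :=
  -(haarItv (gridL α r k m) ((gridL α r k m + gridR α r k m) / 2) t *
      haarItv ((gridL α r k m + gridR α r k m) / 2) (gridR α r k m) x) +
    haarItv ((gridL α r k m + gridR α r k m) / 2) (gridR α r k m) t *
      haarItv (gridL α r k m) ((gridL α r k m + gridR α r k m) / 2) x

/-- The kernel `K^{α,r}(t,x)` of the dyadic Hilbert transform of the grid `D^{α,r}`. -/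
def Kker (α r t x : ℝ) : ℝ := ∑' p : ℤ × ℤ, Ksummand α r p.1 p.2 t x

/-- The length `2^r 2^{-k}` of the intervals of generation `k` of the grid `D^{α,r}`. -/
def len (r : ℝ) (k : ℤ) : ℝ := (2 : ℝ) ^ r * (2 : ℝ) ^ (-k)

lemma len_pos (r : ℝ) (k : ℤ) : 0 < len r k := by unfold len; positivity

lemma gridL_eq (α r : ℝ) (k m : ℤ) : gridL α r k m = m * len r k + α := by
  unfold gridL len; ring

lemma gridR_eq (α r : ℝ) (k m : ℤ) : gridR α r k m = (m + 1) * len r k + α := by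
  unfold gridR len; ring

/-- The part of the kernel at scale `k`: the summand of the interval of generation `k`
that contains `t`. -/
def scaleK (r t x : ℝ) (k : ℤ) (α : ℝ) : ℝ := Ksummand α r k ⌊(t - α) / len r k⌋ t x

lemma haarItv_eq_zero {a b x : ℝ} (h : ¬(a ≤ x ∧ x < b)) : haarItv a b x = 0 := by
  unfold haarItv
  rw [if_neg, if_neg]
  · rintro ⟨h1, h2⟩
    exact h ⟨by linarith, h2⟩
  · rintro ⟨h1, h2⟩
    exact h ⟨h1, by linarith⟩

lemma abs_haarItv_le (a b x : ℝ) : |haarItv a b x| ≤ (Real.sqrt (b - a))⁻¹ := by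
  have h : 0 ≤ (Real.sqrt (b - a))⁻¹ := by positivity
  unfold haarItv
  split_ifs
  · rw [abs_neg, abs_of_nonneg h]
  · rw [abs_of_nonneg h]
  · simp

/-- A nonzero summand forces both points to lie in the interval. -/
lemma mem_of_Ksummand_ne_zero {α r t x : ℝ} {k m : ℤ} (h : Ksummand α r k m t x ≠ 0) :
    (gridL α r k m ≤ t ∧ t < gridR α r k m) ∧ (gridL α r k m ≤ x ∧ x < gridR α r k m) := by
  have hL : gridL α r k m < gridR α r k m := by
    rw [gridL_eq, gridR_eq]; linarith [len_pos r k]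
  by_contra hc
  apply h
  unfold Ksummand
  rw [not_and_or] at hc
  rcases hc with hc | hc
  · rw [haarItv_eq_zero (x := t), haarItv_eq_zero (x := t)]
    · ring
    all_goals rintro ⟨h1, h2⟩; exact hc ⟨by linarith, by linarith⟩
  · rw [haarItv_eq_zero (x := x), haarItv_eq_zero (x := x)]
    · ring
    all_goals rintro ⟨h1, h2⟩; exact hc ⟨by linarith, by linarith⟩

lemma abs_Ksummand_le (α r : ℝ) (k m : ℤ) (t x : ℝ) :
    |Ksummand α r k m t x| ≤ 4 / len r k := by
  have hl := len_pos r k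
  have e1 : (gridL α r k m + gridR α r k m) / 2 - gridL α r k m = len r k / 2 := by
    rw [gridL_eq, gridR_eq]; ring
  have e2 : gridR α r k m - (gridL α r k m + gridR α r k m) / 2 = len r k / 2 := by
    rw [gridL_eq, gridR_eq]; ring
  have b1 := fun y => abs_haarItv_le (gridL α r k m) ((gridL α r k m + gridR α r k m) / 2) y
  have b2 := fun y => abs_haarItv_le ((gridL α r k m + gridR α r k m) / 2) (gridR α r k m) y
  rw [e1] at b1
  rw [e2] at b2
  have hs : (Real.sqrt (len r k / 2))⁻¹ * (Real.sqrt (len r k / 2))⁻¹ = 2 / len r k := by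
    rw [← mul_inv, Real.mul_self_sqrt (by positivity), inv_div]
  unfold Ksummand
  refine (abs_add_le _ _).trans ?_
  rw [abs_neg, abs_mul, abs_mul]
  have h1 := mul_le_mul (b1 t) (b2 x) (abs_nonneg _) (by positivity)
  have h2 := mul_le_mul (b2 t) (b1 x) (abs_nonneg _) (by positivity)
  rw [hs] at h1 h2
  calc _ ≤ 2 / len r k + 2 / len r k := add_le_add h1 h2
    _ = 4 / len r k := by ring

/-- At each scale only the interval containing `t` can contribute, so the double series is
supported on the graph of `k ↦ ⌊(t - α) / len r k⌋`; no summability is needed. -/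
lemma Kker_eq (α r t x : ℝ) : Kker α r t x = ∑' k : ℤ, scaleK r t x k α := by
  have hinj : Function.Injective (fun k : ℤ => ((k, ⌊(t - α) / len r k⌋) : ℤ × ℤ)) :=
    fun a b h => (Prod.ext_iff.1 h).1
  unfold Kker
  rw [← hinj.tsum_eq (f := fun p : ℤ × ℤ => Ksummand α r p.1 p.2 t x)]
  · rfl
  · rintro ⟨k, m⟩ h
    refine ⟨k, Prod.ext rfl ?_⟩
    have h1 := (mem_of_Ksummand_ne_zero h).1
    have hl := len_pos r k
    simp only [gridL_eq, gridR_eq] at h1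
    change ⌊(t - α) / len r k⌋ = m
    rw [Int.floor_eq_iff, le_div_iff₀ hl, div_lt_iff₀ hl]
    constructor <;> linarith

lemma scaleK_periodic (r t x : ℝ) (k : ℤ) : Function.Periodic (scaleK r t x k) (len r k) := by
  intro α
  have hl := len_pos r k
  have hf : ⌊(t - (α + len r k)) / len r k⌋ = ⌊(t - α) / len r k⌋ - 1 := by
    rw [← Int.floor_sub_one]
    congr 1
    field_simp
    ring
  have eL : gridL (α + len r k) r k (⌊(t - α) / len r k⌋ - 1)
      = gridL α r k ⌊(t - α) / len r k⌋ := by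
    rw [gridL_eq, gridL_eq]; push_cast; ring
  have eR : gridR (α + len r k) r k (⌊(t - α) / len r k⌋ - 1)
      = gridR α r k ⌊(t - α) / len r k⌋ := by
    rw [gridR_eq, gridR_eq]; push_cast; ring
  unfold scaleK
  rw [hf]
  unfold Ksummand
  rw [eL, eR]

lemma measurable_haarItv {a b : ℝ → ℝ} (ha : Measurable a) (hb : Measurable b) (x : ℝ) :
    Measurable (fun α => haarItv (a α) (b α) x) := by
  have hm : Measurable (fun α => (a α + b α) / 2) := (ha.add hb).div_const 2
  have hv : Measurable (fun α => (Real.sqrt (b α - a α))⁻¹) := (hb.sub ha).sqrt.inv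
  unfold haarItv
  refine Measurable.ite ?_ hv.neg (Measurable.ite ?_ hv measurable_const)
  · exact (measurableSet_le ha measurable_const).inter (measurableSet_lt measurable_const hm)
  · exact (measurableSet_le hm measurable_const).inter (measurableSet_lt measurable_const hb)

lemma measurable_scaleK (r t x : ℝ) (k : ℤ) : Measurable (scaleK r t x k) := by
  have hf : Measurable (fun α : ℝ => ((⌊(t - α) / len r k⌋ : ℤ) : ℝ)) :=
    measurable_from_top.comp
      (Int.measurable_floor.comp ((measurable_const.sub measurable_id).div_const _))
  have hL : Measurable (fun α : ℝ => gridL α r k ⌊(t - α) / len r k⌋) := by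
    simp only [gridL_eq]
    exact (hf.mul_const _).add measurable_id
  have hR : Measurable (fun α : ℝ => gridR α r k ⌊(t - α) / len r k⌋) := by
    simp only [gridR_eq]
    exact ((hf.add_const 1).mul_const _).add measurable_id
  have hM := (hL.add hR).div_const 2
  exact (((measurable_haarItv hL hM t).mul (measurable_haarItv hM hR x)).neg).add
    ((measurable_haarItv hM hR t).mul (measurable_haarItv hL hM x))

/-- For `len r k ≤ |t - x|` the summand vanishes; otherwise `4 / len r k` is at most
`4 len r k / |t - x|²`. -/
lemma abs_scaleK_le (r : ℝ) {t x : ℝ} (htx : t ≠ x) (k : ℤ) (α : ℝ) :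
    |scaleK r t x k α| ≤ min (4 / len r k) (4 * len r k / |t - x| ^ 2) := by
  have hl := len_pos r k
  have hd : 0 < |t - x| := abs_pos.2 (sub_ne_zero.2 htx)
  have h4 : |scaleK r t x k α| ≤ 4 / len r k := abs_Ksummand_le _ _ _ _ _ _
  refine le_min h4 ?_
  by_cases h0 : scaleK r t x k α = 0
  · rw [h0, abs_zero]; positivity
  · have hm := mem_of_Ksummand_ne_zero h0
    simp only [gridL_eq, gridR_eq] at hm
    have hlt : |t - x| < len r k := by
      rw [abs_lt]; constructor <;> linarith [hm.1.1, hm.1.2, hm.2.1, hm.2.2]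
    refine h4.trans ?_
    rw [div_le_div_iff₀ hl (by positivity)]
    nlinarith

/-- The two entries of the minimum are geometric, decaying as `k → -∞` and `k → ∞`
respectively. -/
lemma summable_bound (r d : ℝ) :
    Summable (fun k : ℤ => min (4 / len r k) (4 * len r k / d ^ 2)) := by
  have hg : Summable (fun n : ℕ => ((1 : ℝ) / 2) ^ n) := summable_geometric_two
  have hnn : ∀ k : ℤ, 0 ≤ min (4 / len r k) (4 * len r k / d ^ 2) := fun k => by
    have := len_pos r k
    exact le_min (by positivity) (by positivity)
  refine Summable.of_nat_of_neg ?_ ?_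
  · refine Summable.of_nonneg_of_le (fun n => hnn _) (fun n => min_le_right _ _) ?_
    refine (hg.mul_left (4 * (2 : ℝ) ^ r / d ^ 2)).congr fun n => ?_
    simp only [len, zpow_neg, zpow_natCast, one_div, inv_pow]
    ring
  · refine Summable.of_nonneg_of_le (fun n => hnn _) (fun n => min_le_left _ _) ?_
    refine (hg.mul_left (4 / (2 : ℝ) ^ r)).congr fun n => ?_
    simp only [len, neg_neg, zpow_natCast, one_div, inv_pow]
    field_simp

lemma intervalIntegrable_of_bounded {f : ℝ → ℝ} {C : ℝ} (hm : Measurable f)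
    (hC : ∀ y, |f y| ≤ C) (a b : ℝ) : IntervalIntegrable f volume a b := by
  refine (intervalIntegrable_const (c := C)).mono_fun hm.aestronglyMeasurable ?_
  exact Eventually.of_forall fun y => (hC y).trans (le_abs_self C)

/-- The primitive of `f` minus its mean over a period is periodic, hence bounded, so it does not
contribute to the limit of the averages. -/
lemma tendsto_average_of_periodic {f : ℝ → ℝ} {T C : ℝ} (hT : 0 < T) (hm : Measurable f)
    (hp : Function.Periodic f T) (hC : ∀ y, |f y| ≤ C) :
    Tendsto (fun R : ℝ => (1 / (2 * R)) * ∫ y in -R..R, f y) atTop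
      (nhds ((∫ y in (0 : ℝ)..T, f y) / T)) := by
  set A := (∫ y in (0 : ℝ)..T, f y) / T with hA
  have hi := intervalIntegrable_of_bounded hm hC
  have hC0 : 0 ≤ C := (abs_nonneg _).trans (hC 0)
  let P : ℝ → ℝ := fun y => (∫ z in (0 : ℝ)..y, f z) - A * y
  have hPper : Function.Periodic P T := by
    intro y
    have h1 := intervalIntegral.integral_add_adjacent_intervals (hi 0 y) (hi y (y + T))
    have h2 := hp.intervalIntegral_add_eq y 0
    rw [zero_add] at h2
    have h3 : A * T = ∫ z in (0 : ℝ)..T, f z := by rw [hA]; field_simp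
    simp only [P]
    rw [← h1, h2, ← h3]
    ring
  have hPb : ∀ y, |P y| ≤ C * T + |A| * T := by
    intro y
    obtain ⟨z, hz, hyz⟩ := hPper.exists_mem_Ico₀ hT y
    rw [hyz]
    have h1 : |∫ w in (0 : ℝ)..z, f w| ≤ C * |z - 0| := by
      rw [← Real.norm_eq_abs (∫ w in (0 : ℝ)..z, f w)]
      exact intervalIntegral.norm_integral_le_of_norm_le_const fun w _ => hC w
    rw [sub_zero, abs_of_nonneg hz.1] at h1
    have h2 : |A * z| = |A| * z := by rw [abs_mul, abs_of_nonneg hz.1]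
    have h3 := mul_le_mul_of_nonneg_left hz.2.le hC0
    have h4 := mul_le_mul_of_nonneg_left hz.2.le (abs_nonneg A)
    exact (abs_sub _ _).trans (by rw [h2]; linarith)
  have hlim : Tendsto (fun R : ℝ => A + (1 / (2 * R)) * (P R - P (-R))) atTop (nhds (A + 0)) := by
    refine tendsto_const_nhds.add ?_
    refine squeeze_zero_norm' (a := fun R : ℝ => (C * T + |A| * T) / R) ?_
      (tendsto_const_nhds.div_atTop tendsto_id)
    filter_upwards [eventually_gt_atTop 0] with R hR
    have h1 : |P R - P (-R)| ≤ 2 * (C * T + |A| * T) :=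
      (abs_sub _ _).trans (by linarith [hPb R, hPb (-R)])
    rw [Real.norm_eq_abs, abs_mul, abs_of_pos (by positivity : 0 < 1 / (2 * R))]
    calc _ ≤ 1 / (2 * R) * (2 * (C * T + |A| * T)) := by gcongr
      _ = _ := by field_simp
  rw [add_zero] at hlim
  refine hlim.congr' ?_
  filter_upwards [eventually_gt_atTop 0] with R hR
  have h1 := intervalIntegral.integral_interval_sub_left (hi 0 R) (hi 0 (-R))
  rw [← h1]
  simp only [P]
  field_simp
  ring

/-- existence of the translation average of the kernel. -/
theorem statement18 (r : ℝ) (hr : r ∈ Set.Ico (1 : ℝ) 2) (t x : ℝ) (htx : t ≠ x) :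
    ∃ A : ℝ, Filter.Tendsto
      (fun R : ℝ => (1 / (2 * R)) * ∫ α in -R..R, Kker α r t x)
      Filter.atTop (nhds A) := by
  set b : ℤ → ℝ := fun k => min (4 / len r k) (4 * len r k / |t - x| ^ 2)
  have hb : Summable b := summable_bound r |t - x|
  have hF : ∀ k α, |scaleK r t x k α| ≤ b k := fun k α => abs_scaleK_le r htx k α
  have hint : ∀ R : ℝ, ∫ α in -R..R, Kker α r t x = ∑' k, ∫ α in -R..R, scaleK r t x k α := by
    intro R
    refine (HasSum.tsum_eq ?_).symm
    refine intervalIntegral.hasSum_integral_of_dominated_convergence (fun k _ => b k)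
      (fun k => (measurable_scaleK r t x k).aestronglyMeasurable)
      (fun k => Eventually.of_forall fun α _ => hF k α)
      (Eventually.of_forall fun _ _ => hb) intervalIntegrable_const
      (Eventually.of_forall fun α _ => ?_)
    rw [Kker_eq]
    exact (Summable.of_norm_bounded hb fun k => hF k α).hasSum
  refine ⟨∑' k, (∫ α in (0 : ℝ)..len r k, scaleK r t x k α) / len r k, ?_⟩
  simp only [hint, ← tsum_mul_left]
  refine tendsto_tsum_of_dominated_convergence hb
    (fun k => tendsto_average_of_periodic (len_pos r k) (measurable_scaleK r t x k)
      (scaleK_periodic r t x k) (hF k)) ?_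
  filter_upwards [eventually_gt_atTop 0] with R hR k
  have h1 : |∫ α in -R..R, scaleK r t x k α| ≤ b k * |R - -R| := by
    rw [← Real.norm_eq_abs (∫ α in -R..R, scaleK r t x k α)]
    exact intervalIntegral.norm_integral_le_of_norm_le_const fun α _ => hF k α
  rw [sub_neg_eq_add, abs_of_pos (by positivity : 0 < R + R)] at h1
  rw [Real.norm_eq_abs, abs_mul, abs_of_pos (by positivity : 0 < 1 / (2 * R))]
  calc _ ≤ 1 / (2 * R) * (b k * (R + R)) := by gcongr
    _ = b k := by field_simp; ring

end
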